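/- Let a = (4/π)·𝒦(1/√2)² and b = a/2. For every K > 1, max{ exp(π(K−1)), exp(b(K − 1/K)) } < λ(K) < min{ exp(a(K−1)), exp((π + b/K)(K−1)) }. -/

import Mathlib

open Set Filter

/-- Complete elliptic integral of the first kind. -/
noncomputable def ellK (r : ℝ) : ℝ :=
  ∫ θ in (0:ℝ)..(Real.pi / 2), (1 - r ^ 2 * Real.sin θ ^ 2) ^ (-(1/2) : ℝ)

/-- The Grötzsch modulus μ(r) = (π/2)·𝒦'(r)/𝒦(r). -/
noncomputable def mu (r : ℝ) : ℝ :=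
  Real.pi / 2 * ellK (Real.sqrt (1 - r ^ 2)) / ellK r

noncomputable def HH (k : ℕ) (p x : ℝ) : ℝ :=
  ∫ θ in (0:ℝ)..(Real.pi / 2), (Real.sin θ ^ 2) ^ k * (1 - x * Real.sin θ ^ 2) ^ p

lemma D_ge (x θ : ℝ) (hx : 0 ≤ x) : 1 - x ≤ 1 - x * Real.sin θ ^ 2 := by
  nlinarith [Real.sin_sq_le_one θ]

lemma D_pos {x : ℝ} (hx : x < 1) (θ : ℝ) : 0 < 1 - x * Real.sin θ ^ 2 := by
  rcases le_total 0 x with h | h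
  · linarith [D_ge x θ h]
  · nlinarith [sq_nonneg (Real.sin θ)]

lemma cont_int (k : ℕ) (p : ℝ) {x : ℝ} (hx : x < 1) :
    Continuous (fun θ => (Real.sin θ ^ 2) ^ k * (1 - x * Real.sin θ ^ 2) ^ p) := by
  apply Continuous.mul (by fun_prop)
  apply Continuous.rpow_const (by fun_prop)
  intro θ
  exact Or.inl (D_pos hx θ).ne'

lemma HH_deriv (k : ℕ) (p : ℝ) (hp : p ≤ 1) {x : ℝ} (hx0 : 0 < x) (hx : x < 1) :
    HasDerivAt (HH k p) (-p * HH (k+1) (p-1) x) x := by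
  obtain ⟨y, hxy, hy⟩ := exists_between hx
  have hs : Set.Ioo 0 y ∈ nhds x := Ioo_mem_nhds hx0 hxy
  have key := intervalIntegral.hasDerivAt_integral_of_dominated_loc_of_deriv_le
    (μ := MeasureTheory.volume) (a := 0) (b := Real.pi / 2)
    (F := fun x θ => (Real.sin θ ^ 2) ^ k * (1 - x * Real.sin θ ^ 2) ^ p)
    (F' := fun x θ => -p * ((Real.sin θ ^ 2) ^ (k+1) * (1 - x * Real.sin θ ^ 2) ^ (p-1)))
    (x₀ := x) (bound := fun _ => |p| * (1 - y) ^ (p-1)) hs ?_ ?_ ?_ ?_ ?_ ?_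
  · have h2 := key.2
    rw [intervalIntegral.integral_const_mul] at h2
    exact h2
  · filter_upwards [hs] with z hz
    exact (cont_int k p (hz.2.trans hy)).aestronglyMeasurable
  · exact (cont_int k p hx).intervalIntegrable _ _
  · exact ((cont_int (k+1) (p-1) hx).const_mul (-p)).aestronglyMeasurable
  · refine Filter.Eventually.of_forall fun θ _ z hz => ?_
    have hD := D_pos (hz.2.trans hy) θ
    have hD2 := D_ge z θ hz.1.le
    rw [norm_mul, Real.norm_eq_abs, abs_neg, Real.norm_eq_abs]
    have h1 : (1 - z * Real.sin θ ^ 2) ^ (p-1) ≤ (1-y) ^ (p-1) :=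
      Real.rpow_le_rpow_of_nonpos (by linarith) (by linarith [hz.2]) (by linarith)
    have h0 : 0 ≤ (1 - z * Real.sin θ ^ 2) ^ (p-1) := (Real.rpow_pos_of_pos hD _).le
    have h2 : (Real.sin θ ^ 2) ^ (k+1) ≤ 1 := pow_le_one₀ (sq_nonneg _) (Real.sin_sq_le_one θ)
    have h3 : 0 ≤ (Real.sin θ ^ 2) ^ (k+1) := by positivity
    rw [abs_of_nonneg (mul_nonneg h3 h0)]
    apply mul_le_mul_of_nonneg_left _ (abs_nonneg p)
    nlinarith
  · exact intervalIntegrable_const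
  · refine Filter.Eventually.of_forall fun θ _ z hz => ?_
    have hD := D_pos (hz.2.trans hy) θ
    have h1 : HasDerivAt (fun z : ℝ => 1 - z * Real.sin θ ^ 2) (-(Real.sin θ ^ 2)) z := by
      simpa using ((hasDerivAt_id z).mul_const (Real.sin θ ^ 2)).const_sub 1
    have h2 := (h1.rpow_const (p := p) (Or.inl hD.ne')).const_mul ((Real.sin θ ^ 2) ^ k)
    refine HasDerivAt.congr_deriv h2 ?_
    ring

noncomputable def FF (x : ℝ) : ℝ := HH 0 (-1/2) x
noncomputable def F1 (x : ℝ) : ℝ := 1/2 * HH 1 (-3/2) x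
noncomputable def F2 (x : ℝ) : ℝ := 3/4 * HH 2 (-5/2) x

lemma FF_deriv {x : ℝ} (h0 : 0 < x) (h1 : x < 1) : HasDerivAt FF (F1 x) x := by
  have := HH_deriv 0 (-1/2) (by norm_num) h0 h1
  refine HasDerivAt.congr_deriv this ?_
  unfold F1; norm_num

lemma F1_deriv {x : ℝ} (h0 : 0 < x) (h1 : x < 1) : HasDerivAt F1 (F2 x) x := by
  have := (HH_deriv 1 (-3/2) (by norm_num) h0 h1).const_mul (1/2)
  refine HasDerivAt.congr_deriv this ?_
  unfold F2; norm_num; ring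

lemma D_deriv (x θ : ℝ) : HasDerivAt (fun θ => 1 - x * Real.sin θ ^ 2)
    (-(2 * x * Real.sin θ * Real.cos θ)) θ := by
  have := (((Real.hasDerivAt_sin θ).pow 2).const_mul x).const_sub 1
  refine HasDerivAt.congr_deriv this ?_
  simp; ring

lemma ode {x : ℝ} (h1 : x < 1) :
    x * (1 - x) * F2 x + (1 - 2*x) * F1 x - FF x / 4 = 0 := by
  unfold F2 F1 FF HH
  have c0 := (cont_int 0 (-1/2) h1).intervalIntegrable (μ := MeasureTheory.volume) 0 (Real.pi/2)
  have c1 := (cont_int 1 (-3/2) h1).intervalIntegrable (μ := MeasureTheory.volume) 0 (Real.pi/2)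
  have c2 := (cont_int 2 (-5/2) h1).intervalIntegrable (μ := MeasureTheory.volume) 0 (Real.pi/2)
  have ftc := intervalIntegral.integral_eq_sub_of_hasDerivAt (a := 0) (b := Real.pi/2)
    (f := fun θ => -1/4 * (Real.sin θ * Real.cos θ * (1 - x * Real.sin θ ^ 2) ^ (-3/2 : ℝ)))
    (f' := fun θ => x * (1-x) * (3/4) * ((Real.sin θ ^ 2) ^ 2 * (1 - x * Real.sin θ ^ 2) ^ (-5/2:ℝ))
      + (1-2*x) * (1/2) * ((Real.sin θ ^ 2) ^ 1 * (1 - x * Real.sin θ ^ 2) ^ (-3/2:ℝ))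
      + (-1/4) * ((Real.sin θ ^ 2) ^ 0 * (1 - x * Real.sin θ ^ 2) ^ (-1/2:ℝ))) ?_ ?_
  · rw [intervalIntegral.integral_add ((c2.const_mul _).add (c1.const_mul _)) (c0.const_mul _),
      intervalIntegral.integral_add (c2.const_mul _) (c1.const_mul _),
      intervalIntegral.integral_const_mul, intervalIntegral.integral_const_mul,
      intervalIntegral.integral_const_mul] at ftc
    simp only [Real.cos_pi_div_two, Real.sin_zero] at ftc
    linarith
  · intro θ _
    have hD := D_pos h1 θ
    have hd := (((Real.hasDerivAt_sin θ).mul (Real.hasDerivAt_cos θ)).mul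
      ((D_deriv x θ).rpow_const (p := -3/2) (Or.inl hD.ne'))).const_mul (-1/4)
    refine HasDerivAt.congr_deriv hd ?_
    have e1 : (1 - x * Real.sin θ ^ 2) ^ (-3/2:ℝ) =
        (1 - x * Real.sin θ ^ 2) ^ (-5/2:ℝ) * (1 - x * Real.sin θ ^ 2) := by
      rw [← Real.rpow_add_one hD.ne']; norm_num
    have e2 : (1 - x * Real.sin θ ^ 2) ^ (-1/2:ℝ) =
        (1 - x * Real.sin θ ^ 2) ^ (-5/2:ℝ) * (1 - x * Real.sin θ ^ 2)^2 := by
      rw [pow_two (1 - x * Real.sin θ ^ 2), ← mul_assoc, ← Real.rpow_add_one hD.ne', ← Real.rpow_add_one hD.ne']; norm_num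
    have e3 : (-3/2 - 1 : ℝ) = -5/2 := by norm_num
    simp only [e1, e2, e3, Pi.mul_apply]
    have hc : Real.cos θ ^ 2 = 1 - Real.sin θ ^ 2 := Real.cos_sq' θ
    generalize (1 - x * Real.sin θ ^ 2) ^ (-5/2:ℝ) = W
    linear_combination (-1 : ℝ) * (W / 4 * (1 - x * Real.sin θ ^ 2) + 3 / 4 * W * x * Real.sin θ ^ 2) * hc
  · exact ((c2.const_mul _).add (c1.const_mul _)).add (c0.const_mul _)

lemma FF_cont {x : ℝ} (h1 : x < 1) :
    Continuous (fun θ => (1 - x * Real.sin θ ^ 2) ^ (-1/2:ℝ)) := by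
  simpa using cont_int 0 (-1/2) h1

lemma FF_eq (x : ℝ) : FF x = ∫ θ in (0:ℝ)..(Real.pi / 2), (1 - x * Real.sin θ ^ 2) ^ (-1/2:ℝ) := by
  simp [FF, HH]

lemma FF_strict {x y : ℝ} (hxy : x < y) (hy : y < 1) : FF x < FF y := by
  rw [FF_eq, FF_eq]
  apply intervalIntegral.integral_lt_integral_of_continuousOn_of_le_of_exists_lt (by positivity)
    (FF_cont (hxy.trans hy)).continuousOn (FF_cont hy).continuousOn
  · intro θ _
    exact Real.rpow_le_rpow_of_nonpos (D_pos hy θ) (by nlinarith [sq_nonneg (Real.sin θ)]) (by norm_num)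
  · refine ⟨Real.pi/2, ⟨by positivity, le_rfl⟩, ?_⟩
    simp only [Real.sin_pi_div_two]
    exact Real.rpow_lt_rpow_of_neg (by linarith) (by linarith) (by norm_num)

lemma FF_zero : FF 0 = Real.pi / 2 := by simp [FF_eq]

lemma FF_lb {x : ℝ} (h0 : 0 < x) (h1 : x < 1) : Real.pi / 2 < FF x := by
  rw [← FF_zero]; exact FF_strict h0 h1

/-- `F(x)² (1-x) < π²/4`. -/
lemma FF_ub {x : ℝ} (h0 : 0 < x) (h1 : x < 1) : FF x < Real.pi / 2 * (1 - x) ^ (-1/2:ℝ) := by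
  have : Real.pi / 2 * (1 - x) ^ (-1/2:ℝ) = ∫ θ in (0:ℝ)..(Real.pi / 2), (1 - x) ^ (-1/2:ℝ) := by
    simp
  rw [FF_eq, this]
  apply intervalIntegral.integral_lt_integral_of_continuousOn_of_le_of_exists_lt (by positivity)
    (FF_cont h1).continuousOn continuousOn_const
  · intro θ _
    exact Real.rpow_le_rpow_of_nonpos (by linarith) (D_ge x θ h0.le) (by norm_num)
  · refine ⟨0, ⟨le_rfl, by positivity⟩, ?_⟩
    simp only [Real.sin_zero]
    exact Real.rpow_lt_rpow_of_neg (by linarith) (by linarith) (by norm_num)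

lemma rpow_neg_half_sq {u : ℝ} (hu : 0 < u) : (u ^ (-1/2:ℝ)) ^ 2 = 1 / u := by
  rw [← Real.rpow_natCast, ← Real.rpow_mul hu.le]
  norm_num [Real.rpow_neg_one]

lemma FF_ub_sq {x : ℝ} (h0 : 0 < x) (h1 : x < 1) : FF x ^ 2 * (1 - x) < Real.pi ^ 2 / 4 := by
  have h := FF_ub h0 h1
  have hl := FF_lb h0 h1
  have hp := Real.pi_pos
  have hu : 0 < 1 - x := by linarith
  have h2 : FF x ^ 2 < (Real.pi / 2 * (1 - x) ^ (-1/2:ℝ))^2 := by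
    apply pow_lt_pow_left₀ h (by linarith) (by norm_num)
  rw [mul_pow, rpow_neg_half_sq hu] at h2
  calc _ < ((Real.pi/2)^2 * (1/(1-x))) * (1-x) := by gcongr
    _ = _ := by field_simp; norm_num

/-- `F(1-y)² · 2y ≤ F(1/2)²` for `y ≤ 1/2`. -/
lemma FF_half {y : ℝ} (h0 : 0 < y) (h1 : y ≤ 1/2) : FF (1-y) ^ 2 * (2*y) ≤ FF (1/2) ^ 2 := by
  have h2y : (0:ℝ) < 2*y := by linarith
  have hle : FF (1-y) ≤ (2*y)^(-1/2:ℝ) * FF (1/2) := by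
    rw [FF_eq, FF_eq, ← intervalIntegral.integral_const_mul]
    apply intervalIntegral.integral_mono_on (by positivity)
      ((FF_cont (by linarith)).intervalIntegrable _ _)
      (((FF_cont (by norm_num)).const_mul _).intervalIntegrable _ _)
    intro θ _
    have hD := D_pos (x := 1/2) (by norm_num) θ
    rw [← Real.mul_rpow h2y.le hD.le]
    apply Real.rpow_le_rpow_of_nonpos (by positivity) _ (by norm_num)
    nlinarith [Real.sin_sq_le_one θ]
  have hpos : 0 < FF (1-y) := by
    have := FF_lb (x := 1-y) (by linarith) (by linarith); linarith [Real.pi_pos]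
  have h2 : FF (1-y) ^ 2 ≤ ((2*y)^(-1/2:ℝ) * FF (1/2))^2 := by gcongr
  rw [mul_pow, rpow_neg_half_sq h2y] at h2
  calc _ ≤ (1/(2*y) * FF (1/2)^2) * (2*y) := by gcongr
    _ = _ := by field_simp

lemma cube_ineq {t : ℝ} (ht : 0 < t) : (3 - 1/t^2)/2 ≤ t := by
  have : t - (3 - 1/t^2)/2 = (t-1)^2*(2*t+1)/(2*t^2) := by field_simp; ring
  have h2 : 0 ≤ (t-1)^2*(2*t+1)/(2*t^2) := by positivity
  linarith

lemma cube_ineq_lt {t : ℝ} (ht : 0 < t) (h : t ≠ 1) : (3 - 1/t^2)/2 < t := by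
  have : t - (3 - 1/t^2)/2 = (t-1)^2*(2*t+1)/(2*t^2) := by field_simp; ring
  have h1 : 0 < (t-1)^2 := by
    have : t - 1 ≠ 0 := sub_ne_zero.2 h
    positivity
  have h2 : 0 < (t-1)^2*(2*t+1)/(2*t^2) := by positivity
  linarith

lemma hold_id {A B Z P Q R : ℝ} (hA : 0 < A) (hB : 0 < B) (hZ : 0 < Z) (hP : 0 < P)
    (hQ : 0 < Q) (hR : 0 < R) (h1 : 2*Z^2 = 1/A^2+1/B^2) (h2 : 2/R^2 = 1/P^2+1/Q^2) :
    P/A^3 + Q/B^3 - 2*Z^3*R = (2*Z^3*R) *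
      (1/(2*A^2*Z^2) * (P/(A*Z*R) - (3 - 1/(P/(A*Z*R))^2)/2) +
       1/(2*B^2*Z^2) * (Q/(B*Z*R) - (3 - 1/(Q/(B*Z*R))^2)/2)) := by
  have e1 : (2*Z^3*R) *
      (1/(2*A^2*Z^2) * (P/(A*Z*R) - (3 - 1/(P/(A*Z*R))^2)/2) +
       1/(2*B^2*Z^2) * (Q/(B*Z*R) - (3 - 1/(Q/(B*Z*R))^2)/2)) =
     P/A^3 + Q/B^3 - 3/2*Z*R*(1/A^2+1/B^2) + Z^3*R^3/2*(1/P^2+1/Q^2) := by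
    field_simp; ring
  rw [e1, ← h1, ← h2]; field_simp; ring

lemma hold_le {A B Z P Q R : ℝ} (hA : 0 < A) (hB : 0 < B) (hZ : 0 < Z) (hP : 0 < P)
    (hQ : 0 < Q) (hR : 0 < R) (h1 : 2*Z^2 = 1/A^2+1/B^2) (h2 : 2/R^2 = 1/P^2+1/Q^2) :
    2*Z^3*R ≤ P/A^3 + Q/B^3 := by
  have := hold_id hA hB hZ hP hQ hR h1 h2
  have ha := sub_nonneg.2 (cube_ineq (t := P/(A*Z*R)) (by positivity))
  have hb := sub_nonneg.2 (cube_ineq (t := Q/(B*Z*R)) (by positivity))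
  rw [← sub_nonneg, this]
  positivity

lemma hold_lt {A B Z : ℝ} (hA : 0 < A) (hB : 0 < B) (hZ : 0 < Z)
    (h1 : 2*Z^2 = 1/A^2+1/B^2) (hAB : A ≠ B) :
    2*Z^3*1 < 1/A^3 + 1/B^3 := by
  have := hold_id (P := 1) (Q := 1) (R := 1) hA hB hZ one_pos one_pos one_pos h1 (by norm_num)
  rw [← sub_pos, this]
  have ha := sub_nonneg.2 (cube_ineq (t := 1/(A*Z*1)) (by positivity))
  have hb := sub_nonneg.2 (cube_ineq (t := 1/(B*Z*1)) (by positivity))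
  by_cases h : 1/(A*Z*1) = 1
  · have h' : 1/(B*Z*1) ≠ 1 := by
      intro h'
      apply hAB
      rw [← h] at h'
      field_simp at h'
      linarith
    have hb' := sub_pos.2 (cube_ineq_lt (t := 1/(B*Z*1)) (by positivity) h')
    positivity
  · have ha' := sub_pos.2 (cube_ineq_lt (t := 1/(A*Z*1)) (by positivity) h)
    positivity

lemma FF_mink {x : ℝ} (h0 : 1/2 < x) (h1 : x < 1) :
    1 / FF x ^ 2 + 1 / FF (1-x) ^ 2 < 2 / FF (1/2) ^ 2 := by
  have hp := Real.pi_pos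
  have hA : 0 < FF x := by linarith [FF_lb (x := x) (by linarith) h1]
  have hB : 0 < FF (1-x) := by linarith [FF_lb (x := 1-x) (by linarith) (by linarith)]
  have hC : 0 < FF (1/2) := by linarith [FF_lb (x := 1/2) (by linarith) (by linarith)]
  have hAB : FF x ≠ FF (1-x) := (FF_strict (x := 1-x) (y := x) (by linarith) h1).ne'
  obtain ⟨Z, hZ, hZ2⟩ : ∃ Z : ℝ, 0 < Z ∧ 2*Z^2 = 1/FF x^2+1/FF (1-x)^2 := by
    refine ⟨Real.sqrt ((1/FF x^2+1/FF (1-x)^2)/2), by positivity, ?_⟩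
    rw [Real.sq_sqrt (by positivity)]; ring
  have key : 2*Z^3 * FF (1/2) < 1/FF x^3 * FF x + 1/FF (1-x)^3 * FF (1-x) := by
    have i1 := (FF_cont h1).intervalIntegrable (μ := MeasureTheory.volume) 0 (Real.pi/2)
    have i2 := (FF_cont (x := 1-x) (by linarith)).intervalIntegrable (μ := MeasureTheory.volume) 0 (Real.pi/2)
    have e : 1/FF x^3 * FF x + 1/FF (1-x)^3 * FF (1-x) = ∫ θ in (0:ℝ)..(Real.pi / 2),
        (1/FF x^3 * (1 - x * Real.sin θ ^ 2) ^ (-1/2:ℝ)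
          + 1/FF (1-x)^3 * (1 - (1-x) * Real.sin θ ^ 2) ^ (-1/2:ℝ)) := by
      rw [intervalIntegral.integral_add (i1.const_mul _) (i2.const_mul _),
        intervalIntegral.integral_const_mul, intervalIntegral.integral_const_mul, ← FF_eq, ← FF_eq]
    rw [e, FF_eq (1/2), ← intervalIntegral.integral_const_mul]
    apply intervalIntegral.integral_lt_integral_of_continuousOn_of_le_of_exists_lt (by positivity)
      ((FF_cont (by norm_num)).const_mul _).continuousOn
      (((FF_cont h1).const_mul _).add ((FF_cont (by linarith)).const_mul _)).continuousOn
    · intro θ _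
      have d1 := D_pos h1 θ
      have d2 := D_pos (x := 1-x) (by linarith) θ
      have d3 := D_pos (x := 1/2) (by linarith) θ
      have := hold_le hA hB hZ (Real.rpow_pos_of_pos d1 (-1/2)) (Real.rpow_pos_of_pos d2 (-1/2))
        (Real.rpow_pos_of_pos d3 (-1/2)) hZ2 (by
          rw [rpow_neg_half_sq d1, rpow_neg_half_sq d2, rpow_neg_half_sq d3]
          simp only [div_div_eq_mul_div]; ring)
      calc _ ≤ _ := this
        _ = _ := by simp only [Pi.add_apply]; ring
    · refine ⟨0, ⟨le_rfl, by positivity⟩, ?_⟩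
      have := hold_lt hA hB hZ hZ2 hAB
      simpa using this
  have e2 : 1/FF x^3 * FF x + 1/FF (1-x)^3 * FF (1-x) = 2*Z^2 := by
    rw [hZ2]; field_simp
  rw [e2] at key
  rw [← hZ2]
  have h3 : Z * FF (1/2) < 1 := by
    by_contra hcon
    push Not at hcon
    nlinarith [mul_le_mul_of_nonneg_left hcon (by positivity : 0 ≤ 2*Z^2)]
  rw [lt_div_iff₀ (by positivity)]
  have : (Z * FF (1/2))^2 < 1 := by
    apply pow_lt_one₀ (by positivity) h3 (by norm_num)
  nlinarith

noncomputable def MM (x : ℝ) : ℝ := x * (1-x) * (F1 x * FF (1-x) + FF x * F1 (1-x))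

lemma MM_deriv {x : ℝ} (h0 : 0 < x) (h1 : x < 1) : HasDerivAt MM 0 x := by
  have k0 : 0 < 1 - x := by linarith
  have k1 : 1 - x < 1 := by linarith
  have hs : HasDerivAt (fun x : ℝ => 1 - x) (-1) x := by
    simpa using (hasDerivAt_id x).const_sub 1
  have d1 := FF_deriv h0 h1
  have d2 := F1_deriv h0 h1
  have d3 : HasDerivAt (fun x => FF (1-x)) (F1 (1-x) * (-1)) x := (FF_deriv k0 k1).comp x hs
  have d4 : HasDerivAt (fun x => F1 (1-x)) (F2 (1-x) * (-1)) x := (F1_deriv k0 k1).comp x hs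
  have d := ((hasDerivAt_id x).mul hs).mul ((d2.mul d3).add (d1.mul d4))
  refine HasDerivAt.congr_deriv d ?_
  have o1 := ode h1
  have o2 := ode k1
  simp only [Pi.mul_apply, Pi.add_apply, id]
  linear_combination FF (1-x) * o1 - FF x * o2

lemma HH1_exact {x : ℝ} (h1 : x < 1) :
    (1 - x) * ∫ θ in (0:ℝ)..(Real.pi / 2), Real.sin θ * (1 - x * Real.sin θ ^ 2) ^ (-3/2:ℝ) = 1 := by
  rw [← intervalIntegral.integral_const_mul]
  have hc : Continuous (fun θ => (1-x) * (Real.sin θ * (1 - x * Real.sin θ ^ 2) ^ (-3/2:ℝ))) := by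
    have h := cont_int 0 (-3/2) h1
    simp only [pow_zero, one_mul] at h
    exact continuous_const.mul (Real.continuous_sin.mul h)
  rw [intervalIntegral.integral_eq_sub_of_hasDerivAt
    (f := fun θ => - Real.cos θ * (1 - x * Real.sin θ ^ 2) ^ (-1/2 : ℝ)) ?_
    (hc.intervalIntegrable _ _)]
  · simp
  · intro θ _
    have hD := D_pos h1 θ
    have hd := (Real.hasDerivAt_cos θ).neg.mul
      ((D_deriv x θ).rpow_const (p := -1/2) (Or.inl hD.ne'))
    refine HasDerivAt.congr_deriv hd ?_
    have e1 : (1 - x * Real.sin θ ^ 2) ^ (-1/2:ℝ) =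
        (1 - x * Real.sin θ ^ 2) ^ (-3/2:ℝ) * (1 - x * Real.sin θ ^ 2) := by
      rw [← Real.rpow_add_one hD.ne']; norm_num
    have e3 : (-1/2 - 1 : ℝ) = -3/2 := by norm_num
    simp only [e1, e3, Pi.neg_apply]
    have hc : Real.cos θ ^ 2 = 1 - Real.sin θ ^ 2 := Real.cos_sq' θ
    generalize (1 - x * Real.sin θ ^ 2) ^ (-3/2:ℝ) = W
    linear_combination (-(W * x * Real.sin θ)) * hc

lemma F1_bounds {x : ℝ} (h0 : 0 < x) (h1 : x < 1) :
    2 * (x * F1 (1-x)) ≤ 1 ∧ 1 - x * FF (1-x) ≤ 2 * (x * F1 (1-x)) := by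
  have k1 : 1 - x < 1 := by linarith
  have he := HH1_exact k1
  rw [sub_sub_cancel] at he
  have c0 := (FF_cont k1)
  have c1 := (cont_int 1 (-3/2) k1)
  have c2 : Continuous (fun θ => Real.sin θ * (1 - (1-x) * Real.sin θ ^ 2) ^ (-3/2:ℝ)) := by
    have h := cont_int 0 (-3/2) k1
    simp only [pow_zero, one_mul] at h
    exact Real.continuous_sin.mul h
  have hpi : (0:ℝ) ≤ Real.pi/2 := by positivity
  have l1 : HH 1 (-3/2) (1-x) ≤
      ∫ θ in (0:ℝ)..(Real.pi / 2), Real.sin θ * (1 - (1-x) * Real.sin θ ^ 2) ^ (-3/2:ℝ) := by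
    unfold HH
    apply intervalIntegral.integral_mono_on hpi (c1.intervalIntegrable _ _) (c2.intervalIntegrable _ _)
    intro θ hθ
    have hs : 0 ≤ Real.sin θ := Real.sin_nonneg_of_nonneg_of_le_pi hθ.1 (by linarith [hθ.2])
    apply mul_le_mul_of_nonneg_right _ (Real.rpow_pos_of_pos (D_pos k1 θ) _).le
    nlinarith [Real.sin_le_one θ]
  have l2 : (∫ θ in (0:ℝ)..(Real.pi / 2), Real.sin θ * (1 - (1-x) * Real.sin θ ^ 2) ^ (-3/2:ℝ))
      ≤ HH 1 (-3/2) (1-x) + FF (1-x) := by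
    rw [FF_eq]
    unfold HH
    rw [← intervalIntegral.integral_add (c1.intervalIntegrable _ _) (c0.intervalIntegrable _ _)]
    apply intervalIntegral.integral_mono_on hpi (c2.intervalIntegrable _ _)
      ((c1.add c0).intervalIntegrable _ _)
    intro θ hθ
    have hs : 0 ≤ Real.sin θ := Real.sin_nonneg_of_nonneg_of_le_pi hθ.1 (by linarith [hθ.2])
    have hD := D_pos k1 θ
    have e1 : (1 - (1-x) * Real.sin θ ^ 2) ^ (-1/2:ℝ) =
        (1 - (1-x) * Real.sin θ ^ 2) ^ (-3/2:ℝ) * (1 - (1-x) * Real.sin θ ^ 2) := by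
      rw [← Real.rpow_add_one hD.ne']; norm_num
    simp only [Pi.add_apply]
    rw [e1]
    have hW := (Real.rpow_pos_of_pos hD (-3/2))
    generalize (1 - (1-x) * Real.sin θ ^ 2) ^ (-3/2:ℝ) = W at *
    have : Real.sin θ ≤ Real.sin θ ^ 2 + (1 - (1-x) * Real.sin θ ^ 2) := by
      nlinarith [Real.sin_le_one θ, mul_nonneg h0.le (sq_nonneg (Real.sin θ))]
    nlinarith [mul_le_mul_of_nonneg_right this hW.le]
  unfold F1
  constructor
  · have := mul_le_mul_of_nonneg_left l1 h0.le
    linarith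
  · have := mul_le_mul_of_nonneg_left l2 h0.le
    linarith

lemma F1_mono {x : ℝ} (h0 : 0 < x) (h1 : x < 1/2) : 0 ≤ F1 x ∧ F1 x ≤ F1 (1/2) := by
  unfold F1 HH
  have hpi : (0:ℝ) ≤ Real.pi/2 := by positivity
  constructor
  · apply mul_nonneg (by norm_num)
    apply intervalIntegral.integral_nonneg hpi
    intro θ _
    exact mul_nonneg (by positivity) (Real.rpow_pos_of_pos (D_pos (by linarith) θ) _).le
  · apply mul_le_mul_of_nonneg_left _ (by norm_num)
    apply intervalIntegral.integral_mono_on hpi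
      ((cont_int _ _ (by linarith)).intervalIntegrable _ _)
      ((cont_int _ _ (by linarith)).intervalIntegrable _ _)
    intro θ _
    apply mul_le_mul_of_nonneg_left _ (by positivity)
    exact Real.rpow_le_rpow_of_nonpos (D_pos (by norm_num) θ)
      (by nlinarith [sq_nonneg (Real.sin θ)]) (by norm_num)

open Topology in
lemma MM_lim : Tendsto MM (𝓝[>] 0) (𝓝 (Real.pi / 4)) := by
  have hev : ∀ᶠ x : ℝ in 𝓝[>] 0, 0 < x ∧ x < 1/2 := by
    filter_upwards [Ioo_mem_nhdsGT (show (0:ℝ) < 1/2 by norm_num)] with x hx using hx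
  have tx : Tendsto (fun x : ℝ => x) (𝓝[>] 0) (𝓝 0) := tendsto_nhdsWithin_of_tendsto_nhds tendsto_id
  have t1 : Tendsto (fun x : ℝ => 1 - x) (𝓝[>] 0) (𝓝 1) := by
    simpa using tx.const_sub 1
  have tF : Tendsto FF (𝓝[>] 0) (𝓝 (Real.pi / 2)) := by
    have tu : Tendsto (fun x : ℝ => Real.pi / 2 * (1 - x) ^ (-1/2:ℝ)) (𝓝[>] 0) (𝓝 (Real.pi / 2)) := by
      have := (t1.rpow_const (p := -1/2) (Or.inl one_ne_zero)).const_mul (Real.pi/2)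
      simpa using this
    refine tendsto_of_tendsto_of_tendsto_of_le_of_le' tendsto_const_nhds tu ?_ ?_
    · filter_upwards [hev] with x hx
      exact (FF_lb hx.1 (by linarith)).le
    · filter_upwards [hev] with x hx
      exact (FF_ub hx.1 (by linarith)).le
  have tG : Tendsto (fun x => x * FF (1-x)) (𝓝[>] 0) (𝓝 0) := by
    have tu : Tendsto (fun x : ℝ => Real.pi / 2 * x ^ (1/2:ℝ)) (𝓝[>] 0) (𝓝 0) := by
      have := (tx.rpow_const (p := 1/2) (Or.inr (by norm_num))).const_mul (Real.pi/2)
      simpa using this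
    refine tendsto_of_tendsto_of_tendsto_of_le_of_le' tendsto_const_nhds tu ?_ ?_
    · filter_upwards [hev] with x hx
      have := FF_lb (x := 1-x) (by linarith) (by linarith)
      exact mul_nonneg hx.1.le (by linarith [Real.pi_pos])
    · filter_upwards [hev] with x hx
      have h := FF_ub (x := 1-x) (by linarith) (by linarith)
      rw [sub_sub_cancel] at h
      have e : x ^ (1/2:ℝ) = x ^ (-1/2:ℝ) * x := by
        rw [← Real.rpow_add_one hx.1.ne']; norm_num
      rw [e]
      nlinarith [mul_le_mul_of_nonneg_left h.le hx.1.le]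
  have tF1 : Tendsto (fun x => 2 * (x * F1 (1-x))) (𝓝[>] 0) (𝓝 1) := by
    have tl : Tendsto (fun x => 1 - x * FF (1-x)) (𝓝[>] 0) (𝓝 1) := by
      simpa using tG.const_sub 1
    refine tendsto_of_tendsto_of_tendsto_of_le_of_le' tl tendsto_const_nhds ?_ ?_
    · filter_upwards [hev] with x hx
      exact (F1_bounds hx.1 (by linarith)).2
    · filter_upwards [hev] with x hx
      exact (F1_bounds hx.1 (by linarith)).1
  have tA : Tendsto (fun x => F1 x * (x * FF (1-x))) (𝓝[>] 0) (𝓝 0) := by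
    have tu : Tendsto (fun x => F1 (1/2) * (x * FF (1-x))) (𝓝[>] 0) (𝓝 0) := by
      simpa using tG.const_mul (F1 (1/2))
    refine tendsto_of_tendsto_of_tendsto_of_le_of_le' tendsto_const_nhds tu ?_ ?_
    · filter_upwards [hev] with x hx
      have := FF_lb (x := 1-x) (by linarith) (by linarith)
      exact mul_nonneg (F1_mono hx.1 hx.2).1 (mul_nonneg hx.1.le (by linarith [Real.pi_pos]))
    · filter_upwards [hev] with x hx
      have := FF_lb (x := 1-x) (by linarith) (by linarith)
      exact mul_le_mul_of_nonneg_right (F1_mono hx.1 hx.2).2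
        (mul_nonneg hx.1.le (by linarith [Real.pi_pos]))
  have tot := t1.mul (tA.add ((tF.mul tF1).const_mul (1/2)))
  have e : (1:ℝ) * (0 + 1/2 * (Real.pi/2 * 1)) = Real.pi / 4 := by ring
  rw [e] at tot
  refine tot.congr fun x => ?_
  unfold MM; ring

lemma MM_eq {x : ℝ} (h0 : 0 < x) (h1 : x < 1) : MM x = Real.pi / 4 := by
  have hc : ∀ y ∈ Set.Ioo (0:ℝ) 1, MM y = MM x := by
    intro y hy
    refine isOpen_Ioo.is_const_of_deriv_eq_zero (𝕜 := ℝ) isPreconnected_Ioo ?_ ?_ hy ⟨h0, h1⟩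
    · intro z hz
      exact (MM_deriv hz.1 hz.2).differentiableAt.differentiableWithinAt
    · intro z hz
      exact (MM_deriv hz.1 hz.2).deriv
  have ht : Tendsto MM (nhdsWithin 0 (Set.Ioi 0)) (nhds (MM x)) := by
    refine tendsto_const_nhds.congr' ?_
    filter_upwards [Ioo_mem_nhdsGT (show (0:ℝ) < 1 by norm_num)] with y hy
    exact (hc y hy).symm
  exact tendsto_nhds_unique ht MM_lim

noncomputable def KK (x : ℝ) : ℝ := FF x / FF (1-x)

lemma FF_pos {x : ℝ} (h0 : 0 < x) (h1 : x < 1) : 0 < FF x := by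
  linarith [FF_lb h0 h1, Real.pi_pos]

lemma KK_pos {x : ℝ} (h0 : 0 < x) (h1 : x < 1) : 0 < KK x :=
  div_pos (FF_pos h0 h1) (FF_pos (by linarith) (by linarith))

lemma KK_deriv {x : ℝ} (h0 : 0 < x) (h1 : x < 1) :
    HasDerivAt KK (1 / (x * (1-x)) * (Real.pi / 4 / FF (1-x) ^ 2)) x := by
  have k0 : 0 < 1 - x := by linarith
  have k1 : 1 - x < 1 := by linarith
  have hs : HasDerivAt (fun x : ℝ => 1 - x) (-1) x := by
    simpa using (hasDerivAt_id x).const_sub 1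
  have d1 := FF_deriv h0 h1
  have d3 : HasDerivAt (fun x => FF (1-x)) (F1 (1-x) * (-1)) x := (FF_deriv k0 k1).comp x hs
  have hG := FF_pos k0 k1
  refine HasDerivAt.congr_deriv (d1.div d3 hG.ne') ?_
  rw [← MM_eq h0 h1]
  unfold MM
  field_simp
  ring

lemma L_deriv {x : ℝ} (h0 : 0 < x) (h1 : x < 1) :
    HasDerivAt (fun x => Real.log x - Real.log (1-x)) (1 / (x * (1-x))) x := by
  have k0 : 0 < 1 - x := by linarith
  have hs : HasDerivAt (fun x : ℝ => 1 - x) (-1) x := by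
    simpa using (hasDerivAt_id x).const_sub 1
  refine HasDerivAt.congr_deriv ((Real.hasDerivAt_log h0.ne').sub (hs.log k0.ne')) ?_
  field_simp
  ring

/-- Comparison principle: `f` vanishes at `1/2` and has positive derivative on `(1/2, 1)`. -/
lemma pos_of_deriv {f f' : ℝ → ℝ} (hf : ∀ x, 0 < x → x < 1 → HasDerivAt f (f' x) x)
    (hpos : ∀ x, 1/2 < x → x < 1 → 0 < f' x) (hz : f (1/2) = 0) {x : ℝ} (h0 : 1/2 < x)
    (h1 : x < 1) : 0 < f x := by
  have hm : StrictMonoOn f (Set.Icc (1/2) x) := by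
    apply strictMonoOn_of_deriv_pos (convex_Icc _ _)
    · intro y hy
      exact (hf y (by linarith [hy.1]) (by linarith [hy.2])).continuousAt.continuousWithinAt
    · intro y hy
      rw [interior_Icc] at hy
      rw [(hf y (by linarith [hy.1]) (by linarith [hy.2])).deriv]
      exact hpos y hy.1 (by linarith [hy.2])
  rw [← hz]
  exact hm ⟨le_rfl, h0.le⟩ ⟨h0.le, le_rfl⟩ h0

lemma KK_half : KK (1/2) = 1 := by
  unfold KK
  norm_num
  exact (FF_pos (x := 1/2) (by norm_num) (by norm_num)).ne'

lemma L_half : Real.log (1/2) - Real.log (1-1/2) = 0 := by norm_num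

lemma lower1 {x : ℝ} (h0 : 1/2 < x) (h1 : x < 1) :
    Real.pi * (KK x - 1) < Real.log x - Real.log (1-x) := by
  rw [← sub_pos]
  refine pos_of_deriv (f := fun x => Real.log x - Real.log (1-x) - Real.pi * (KK x - 1))
    (fun x a b => (L_deriv a b).sub (((KK_deriv a b).sub_const 1).const_mul Real.pi)) ?_ ?_ h0 h1
  · intro y a b
    have hG := FF_lb (x := 1-y) (by linarith) (by linarith)
    have hp := Real.pi_pos
    have hG' : 0 < FF (1-y) := by linarith
    have hy : 0 < y := by linarith
    have hy' : 0 < 1-y := by linarith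
    have hq : Real.pi ^ 2 / 4 / FF (1-y) ^ 2 < 1 := by
      rw [div_lt_one (by positivity)]; nlinarith
    have : 0 < 1 / (y * (1-y)) * (1 - Real.pi ^ 2 / 4 / FF (1-y) ^ 2) :=
      mul_pos (by positivity) (by linarith)
    calc _ < _ := this
      _ = _ := by ring
  · simp only [KK_half, L_half]; ring

lemma upper1 {a : ℝ} (ha : a = 4 / Real.pi * FF (1/2) ^ 2) {x : ℝ} (h0 : 1/2 < x) (h1 : x < 1) :
    Real.log x - Real.log (1-x) < a * (KK x - 1) := by
  rw [← sub_pos]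
  refine pos_of_deriv (f := fun x => a * (KK x - 1) - (Real.log x - Real.log (1-x)))
    (fun x u b => (((KK_deriv u b).sub_const 1).const_mul a).sub (L_deriv u b)) ?_ ?_ h0 h1
  · intro y u b
    have hG := FF_pos (x := 1-y) (by linarith) (by linarith)
    have hlt := FF_strict (x := 1-y) (y := 1/2) (by linarith) (by norm_num)
    have hp := Real.pi_pos
    have hy : 0 < y := by linarith
    have hy' : 0 < 1-y := by linarith
    have hq : 1 < FF (1/2) ^ 2 / FF (1-y) ^ 2 := by
      rw [one_lt_div (by positivity)]; nlinarith
    have : 0 < 1 / (y * (1-y)) * (FF (1/2) ^ 2 / FF (1-y) ^ 2 - 1) :=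
      mul_pos (by positivity) (by linarith)
    calc _ < _ := this
      _ = _ := by rw [ha]; field_simp
  · simp only [KK_half, L_half]; ring

lemma KKinv_deriv {x : ℝ} (h0 : 0 < x) (h1 : x < 1) :
    HasDerivAt (fun x => 1 / KK x) (-(1 / (x * (1-x)) * (Real.pi / 4 / FF x ^ 2))) x := by
  have hF := FF_pos h0 h1
  have hG := FF_pos (x := 1-x) (by linarith) (by linarith)
  have hk := KK_pos h0 h1
  have h := (KK_deriv h0 h1).inv hk.ne'
  simp only [one_div]
  refine HasDerivAt.congr_deriv h ?_
  unfold KK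
  have : 1 - x ≠ 0 := by linarith
  field_simp

lemma lower2 {b : ℝ} (hb : b = 2 / Real.pi * FF (1/2) ^ 2) {x : ℝ} (h0 : 1/2 < x) (h1 : x < 1) :
    b * (KK x - 1 / KK x) < Real.log x - Real.log (1-x) := by
  rw [← sub_pos]
  refine pos_of_deriv (f := fun x => (Real.log x - Real.log (1-x)) - b * (KK x - 1 / KK x))
    (fun x u v => (L_deriv u v).sub (((KK_deriv u v).sub (KKinv_deriv u v)).const_mul b)) ?_ ?_ h0 h1
  · intro y u v
    have hG := FF_pos (x := 1-y) (by linarith) (by linarith)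
    have hF := FF_pos (x := y) (by linarith) (by linarith)
    have hC := FF_pos (x := 1/2) (by linarith) (by linarith)
    have hm := FF_mink u v
    have hp := Real.pi_pos
    have hy : 0 < y := by linarith
    have hy' : 0 < 1-y := by linarith
    have hq : FF (1/2) ^ 2 / 2 * (1 / FF y ^ 2 + 1 / FF (1-y) ^ 2) < 1 := by
      calc _ < FF (1/2) ^ 2 / 2 * (2 / FF (1/2) ^ 2) := by gcongr
        _ = 1 := by field_simp
    have : 0 < 1 / (y * (1-y)) * (1 - FF (1/2) ^ 2 / 2 * (1 / FF y ^ 2 + 1 / FF (1-y) ^ 2)) :=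
      mul_pos (by positivity) (by linarith)
    calc _ < _ := this
      _ = _ := by rw [hb]; field_simp; ring
  · simp only [KK_half, L_half]; ring

lemma upper2 {b : ℝ} (hb : b = 2 / Real.pi * FF (1/2) ^ 2) {x : ℝ} (h0 : 1/2 < x) (h1 : x < 1) :
    Real.log x - Real.log (1-x) < (Real.pi + b / KK x) * (KK x - 1) := by
  have hk := KK_pos (by linarith) h1
  have e : (Real.pi + b / KK x) * (KK x - 1) = Real.pi * (KK x - 1) + b * (1 - 1 / KK x) := by
    field_simp
  rw [e, ← sub_pos]
  refine pos_of_deriv (f := fun x => Real.pi * (KK x - 1) + b * (1 - 1 / KK x)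
      - (Real.log x - Real.log (1-x)))
    (fun x u v => ((((KK_deriv u v).sub_const 1).const_mul Real.pi).add
      (((KKinv_deriv u v).const_sub 1).const_mul b)).sub (L_deriv u v)) ?_ ?_ h0 h1
  · intro y u v
    have hG := FF_pos (x := 1-y) (by linarith) (by linarith)
    have hF := FF_pos (x := y) (by linarith) (by linarith)
    have hC := FF_pos (x := 1/2) (by linarith) (by linarith)
    have hp := Real.pi_pos
    have hy : 0 < y := by linarith
    have hy' : 0 < 1-y := by linarith
    have q1 := FF_ub_sq (x := 1-y) (by linarith) (by linarith)
    have q2 := FF_half (y := 1-y) (by linarith) (by linarith)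
    rw [sub_sub_cancel] at q1 q2
    have r1 : y < Real.pi ^ 2 / 4 / FF (1-y) ^ 2 := by
      rw [lt_div_iff₀ (by positivity)]; linarith
    have r2 : 1 - y ≤ FF (1/2) ^ 2 / 2 / FF y ^ 2 := by
      rw [le_div_iff₀ (by positivity)]; linarith
    have : 0 < 1 / (y * (1-y)) *
        (Real.pi ^ 2 / 4 / FF (1-y) ^ 2 + FF (1/2) ^ 2 / 2 / FF y ^ 2 - 1) :=
      mul_pos (by positivity) (by linarith)
    calc _ < _ := this
      _ = _ := by rw [hb]; field_simp; ring
  · simp only [KK_half, L_half]; ring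

lemma ellK_eq (r : ℝ) : ellK r = FF (r ^ 2) := by
  rw [FF_eq]; unfold ellK
  norm_num

lemma exists_KK {K : ℝ} (hK : 1 < K) : ∃ x : ℝ, 1/2 < x ∧ x < 1 ∧ KK x = K := by
  set a : ℝ := 4 / Real.pi * FF (1/2) ^ 2 with ha
  have hC := FF_pos (x := 1/2) (by norm_num) (by norm_num)
  have hp := Real.pi_pos
  have hapos : 0 < a := by positivity
  set E := Real.exp (a * (K - 1)) with hE
  have hE1 : 1 < E := Real.one_lt_exp_iff.2 (mul_pos hapos (by linarith))
  have hEp : 0 < 1 + E := by linarith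
  set y := E / (1 + E) with hy
  have hy1 : y < 1 := by rw [hy, div_lt_one hEp]; linarith
  have hy0 : 1/2 < y := by rw [hy, lt_div_iff₀ hEp]; linarith
  have h1y : 1 - y = 1 / (1 + E) := by rw [hy]; field_simp; ring
  have hL : Real.log y - Real.log (1-y) = a * (K-1) := by
    rw [← Real.log_div (by linarith) (by linarith), h1y, hy]
    have : E / (1+E) / (1/(1+E)) = E := by field_simp
    rw [this, hE, Real.log_exp]
  have hu := upper1 ha hy0 hy1
  rw [hL] at hu
  have hKy : K < KK y := by
    have := lt_of_mul_lt_mul_left hu hapos.le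
    linarith
  have hc : ContinuousOn KK (Set.Icc (1/2) y) := by
    intro z hz
    exact (KK_deriv (by linarith [hz.1]) (by linarith [hz.2])).continuousAt.continuousWithinAt
  have := intermediate_value_Icc hy0.le hc
  rw [KK_half] at this
  obtain ⟨x, hx, hxK⟩ := this ⟨hK.le, hKy.le⟩
  refine ⟨x, ?_, by linarith [hx.2], hxK⟩
  rcases hx.1.lt_or_eq with h | h
  · exact h
  · rw [← h, KK_half] at hxK; linarith

theorem stmt_6 (lam : ℝ → ℝ)
    (hlam : ∀ K : ℝ, 0 < K → ∀ r ∈ Set.Ioo (0:ℝ) 1,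
      mu r = Real.pi / (2 * K) → lam K = r ^ 2 / (1 - r ^ 2)) (a b : ℝ)
    (ha : a = 4 / Real.pi * ellK (1 / Real.sqrt 2) ^ 2) (hb : b = a / 2) :
    ∀ K : ℝ, 1 < K →
      max (Real.exp (Real.pi * (K - 1))) (Real.exp (b * (K - 1 / K))) < lam K ∧
      lam K < min (Real.exp (a * (K - 1))) (Real.exp ((Real.pi + b / K) * (K - 1))) := by
  intro K hK
  have ha' : a = 4 / Real.pi * FF (1/2) ^ 2 := by
    rw [ha, ellK_eq]
    norm_num
  have hb' : b = 2 / Real.pi * FF (1/2) ^ 2 := by rw [hb, ha']; ring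
  obtain ⟨x, h0, h1, rfl⟩ := exists_KK hK
  have x0 : 0 < x := by linarith
  have x1 : 0 < 1 - x := by linarith
  have hF := FF_pos x0 h1
  have hG := FF_pos x1 (by linarith)
  have hl := hlam (KK x) (by linarith) (Real.sqrt x) ⟨Real.sqrt_pos.2 x0, by
    rw [Real.sqrt_lt' one_pos]; linarith⟩ (by
      unfold mu KK
      rw [ellK_eq, ellK_eq, Real.sq_sqrt x0.le, Real.sq_sqrt x1.le]
      field_simp)
  rw [Real.sq_sqrt x0.le] at hl
  have hlog : lam (KK x) = Real.exp (Real.log x - Real.log (1-x)) := by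
    rw [Real.exp_sub, Real.exp_log x0, Real.exp_log x1, hl]
  rw [hlog, max_lt_iff, lt_min_iff]
  simp only [Real.exp_lt_exp]
  exact ⟨⟨lower1 h0 h1, lower2 hb' h0 h1⟩, upper1 ha' h0 h1, upper2 hb' h0 h1⟩
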